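/- Given any upward closed Σ^0_3 set J of finite binary strings, there exists an oracle machine M such that for each X ∈ 2^ω the following are equivalent: (i) X has a prefix in J; (ii) the domain of M(X) is cofinite; (iii) the domain of M(X) is computable. Moreover, for every X the domain of M(X) equals the range of M(X), and whenever X has no prefix in J the domain of M(X) Turing-computes the halting problem. -/

import Mathlib

open scoped Classical
open MeasureTheory

namespace RandProb

/-- Cantor space: the space of infinite binary sequences. -/
abbrev Cantor := ℕ → Bool

/-! ### Oracle partial recursive functions, via codes -/

/-- Codes for partial recursive functions with access to an oracle `O : ℕ → ℕ`.
These codes play the role of (oracle) Turing machines. -/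
inductive CodeO : Type
  | zero : CodeO
  | succ : CodeO
  | left : CodeO
  | right : CodeO
  | oracle : CodeO
  | pair : CodeO → CodeO → CodeO
  | comp : CodeO → CodeO → CodeO
  | prec : CodeO → CodeO → CodeO
  | rfind' : CodeO → CodeO

/-- Evaluation of an oracle code with (total) oracle `O`. -/
def CodeO.eval (O : ℕ → ℕ) : CodeO → ℕ →. ℕ
  | .zero => pure 0
  | .succ => Nat.succ
  | .left => ↑fun n : ℕ => n.unpair.1
  | .right => ↑fun n : ℕ => n.unpair.2
  | .oracle => ↑fun n : ℕ => O n
  | .pair cf cg => fun n => Nat.pair <$> cf.eval O n <*> cg.eval O n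
  | .comp cf cg => fun n => cg.eval O n >>= cf.eval O
  | .prec cf cg =>
    Nat.unpaired fun a n =>
      n.rec (cf.eval O a) fun y IH => do
        let i ← IH
        cg.eval O (Nat.pair a (Nat.pair y i))
  | .rfind' cf =>
    Nat.unpaired fun a m =>
      (Nat.rfind fun n => (fun m => m = 0) <$> cf.eval O (Nat.pair a (n + m))).map (· + m)

/-- A canonical injective numbering of oracle codes. -/
def CodeO.encode : CodeO → ℕ
  | .zero => 0
  | .succ => 1
  | .left => 2
  | .right => 3
  | .oracle => 4
  | .pair cf cg => 2 * (2 * Nat.pair cf.encode cg.encode) + 5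
  | .comp cf cg => 2 * (2 * Nat.pair cf.encode cg.encode + 1) + 5
  | .prec cf cg => 2 * (2 * Nat.pair cf.encode cg.encode) + 6
  | .rfind' cf => 2 * (2 * cf.encode + 1) + 6

/-- The Turing jump of an oracle: the halting problem relative to `O`,
as a `{0,1}`-valued function. -/
noncomputable def jump (O : ℕ → ℕ) : ℕ → ℕ := fun e =>
  if ∃ c : CodeO, c.encode = e ∧ (c.eval O e).Dom then 1 else 0

/-- `iterJump n` is `∅^(n)`, the `n`-th iterate of the halting problem (as an oracle). -/
noncomputable def iterJump : ℕ → ℕ → ℕ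
  | 0 => fun _ => 0
  | n + 1 => jump (iterJump n)

/-- `S ⊆ ℕ` is computably enumerable relative to the oracle `O`. -/
def CeIn (O : ℕ → ℕ) (S : Set ℕ) : Prop := ∃ c : CodeO, S = {m | (c.eval O m).Dom}

/-- The left Dedekind cut of `α` (as a set of codes of rationals) is c.e. in `O`. -/
def LeftCeIn (O : ℕ → ℕ) (α : ℝ) : Prop :=
  CeIn O {m | ∃ q : ℚ, Encodable.encode q = m ∧ (q : ℝ) < α}

/-- The right Dedekind cut of `α` (as a set of codes of rationals) is c.e. in `O`. -/
def RightCeIn (O : ℕ → ℕ) (α : ℝ) : Prop :=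
  CeIn O {m | ∃ q : ℚ, Encodable.encode q = m ∧ α < (q : ℝ)}

/-! ### Martin-Löf randomness for real numbers -/

/-- The `i`-th component of a Martin-Löf test coded by the set `W ⊆ ℕ`:
the union of all open rational intervals whose codes are enumerated into the
`i`-th section of `W`. -/
def testSet (W : Set ℕ) (i : ℕ) : Set ℝ :=
  {x | ∃ p q : ℚ, Nat.pair i (Encodable.encode (p, q)) ∈ W ∧ (p : ℝ) < x ∧ x < (q : ℝ)}

/-- `α` is Martin-Löf random relative to the oracle `O`. -/
def MLRandomIn (O : ℕ → ℕ) (α : ℝ) : Prop :=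
  ∀ W : Set ℕ, CeIn O W →
    (∀ i, volume (testSet W i) ≤ ENNReal.ofReal ((2 : ℝ)⁻¹ ^ i)) →
    ∃ i, α ∉ testSet W i

/-- `α` is `n`-random: Martin-Löf random relative to `∅^(n-1)`. -/
def NRandom (n : ℕ) (α : ℝ) : Prop := MLRandomIn (iterJump (n - 1)) α

/-! ### The uniform measure on Cantor space -/

/-- The binary digits of a real number (meaningful on `[0,1)`). -/
noncomputable def digits (x : ℝ) : Cantor := fun n => decide (⌊x * 2 ^ (n + 1)⌋ % 2 = 1)

/-- The uniform (Lebesgue) product measure on Cantor space, obtained as the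
pushforward of Lebesgue measure on `[0,1)` under the binary-digit map. -/
noncomputable def mu : Measure Cantor :=
  Measure.map digits (volume.restrict (Set.Ico (0 : ℝ) 1))

/-- The uniform measure of a set of elements of Cantor space, as a real number. -/
noncomputable def muR (S : Set Cantor) : ℝ := (mu S).toReal

/-! ### Strings, prefixes and cylinders -/

/-- The length-`n` initial segment of `X ∈ 2^ω`, as a finite binary string. -/
def initSeg (X : Cantor) (n : ℕ) : List Bool := (List.range n).map X

/-- `⟦S⟧`: the elements of Cantor space having a prefix in the set of strings `S`. -/
def cyl (S : Set (List Bool)) : Set Cantor := {X | ∃ n, initSeg X n ∈ S}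

/-- A set of strings is prefix-free if none of its elements properly extends another. -/
def IsPrefixFree (S : Set (List Bool)) : Prop := ∀ σ ∈ S, ∀ τ ∈ S, σ <+: τ → σ = τ

/-- A set of strings is upward closed if it is closed under taking extensions. -/
def UpClosed (S : Set (List Bool)) : Prop := ∀ σ ∈ S, ∀ τ, σ <+: τ → τ ∈ S

/-- Two strings are compatible if one is a prefix of the other. -/
def Compatible (σ τ : List Bool) : Prop := σ <+: τ ∨ τ <+: σ

/-! ### Oracle machines -/

/-- An element of Cantor space viewed as a `{0,1}`-valued oracle. -/
def oX (X : Cantor) : ℕ → ℕ := fun n => cond (X n) 1 0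

/-- `evalO X c n`: the (possibly divergent) output of the oracle machine `c`
on input `n` with oracle `X`. -/
def evalO (X : Cantor) (c : CodeO) (n : ℕ) : Part ℕ := c.eval (oX X) n

/-- The oracle obtained by writing the string `ρ` before the bits of `X`. -/
def prepend (ρ : List Bool) (X : Cantor) : Cantor := fun n =>
  if n < ρ.length then ρ.getD n false else X (n - ρ.length)

/-- `X ∈ 2^ω` extends the finite string `ρ`. -/
def Extends (X : Cantor) (ρ : List Bool) : Prop := initSeg X ρ.length = ρ

/-- `u` is a universal oracle machine: some effective, prefix-free translation
`c ↦ σ_c` satisfies `u(σ_c * X, n) ≃ c(X, n)` for all machines `c`. -/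
def UniversalOM (u : CodeO) : Prop :=
  ∃ σ : CodeO → List Bool,
    (∃ f : ℕ → ℕ, Computable f ∧ ∀ c : CodeO, f c.encode = Encodable.encode (σ c)) ∧
    IsPrefixFree (Set.range σ) ∧
    ∀ (c : CodeO) (X : Cantor) (n : ℕ), evalO (prepend (σ c) X) u n = evalO X c n

/-- `TOT(c)`: the oracles `X` such that the function `c(X)` is total. -/
def TOT (c : CodeO) : Set Cantor := {X | ∀ n, (evalO X c n).Dom}

/-- The domain of the partial function `c(X)`. -/
def domSet (c : CodeO) (X : Cantor) : Set ℕ := {n | (evalO X c n).Dom}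

/-- The range of the partial function `c(X)`. -/
def ranSet (c : CodeO) (X : Cantor) : Set ℕ := {v | ∃ n, v ∈ evalO X c n}

/-- `INF(c)`: the oracles `X` such that `c(X)` has infinite domain. -/
def INF (c : CodeO) : Set Cantor := {X | (domSet c X).Infinite}

/-- `COF(c)`: the oracles `X` such that `c(X)` has cofinite domain. -/
def COF (c : CodeO) : Set Cantor := {X | (domSet c X)ᶜ.Finite}

/-- `COM(c)`: the oracles `X` such that `c(X)` has computable domain. -/
def COM (c : CodeO) : Set Cantor := {X | ComputablePred fun n => n ∈ domSet c X}

/-- The characteristic function of a set of naturals. -/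
noncomputable def chi (A : Set ℕ) : ℕ → ℕ := fun n => if n ∈ A then 1 else 0

/-- Turing reducibility between sets of naturals. -/
def TuringLEs (B A : Set ℕ) : Prop := ∃ c : CodeO, ∀ n, c.eval (chi A) n = Part.some (chi B n)

/-- The halting problem `∅'` as a set of naturals. -/
noncomputable def HaltingSet : Set ℕ := {e | iterJump 1 e = 1}

/-- `COMPL(c)`: the oracles `X` such that the domain of `c(X)` computes the halting problem. -/
noncomputable def COMPL (c : CodeO) : Set Cantor := {X | TuringLEs HaltingSet (domSet c X)}

/-- Turing reducibility between total functions on ℕ. -/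
def TuringLEf (f g : ℕ → ℕ) : Prop := ∃ c : CodeO, ∀ n, c.eval g n = Part.some (f n)

/-- A real number viewed as an oracle, via its binary expansion. -/
noncomputable def realOracle (α : ℝ) : ℕ → ℕ := oX (digits α)

/-- Two reals have Turing-incomparable degrees. -/
noncomputable def TIncompReal (α β : ℝ) : Prop :=
  ¬ TuringLEf (realOracle α) (realOracle β) ∧ ¬ TuringLEf (realOracle β) (realOracle α)

/-! ### Arithmetical hierarchy -/

/-- Evaluation with the trivial (empty) oracle: ordinary partial recursion. -/
def eval0 (c : CodeO) : ℕ →. ℕ := c.eval fun _ => 0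

/-- `SigmaNumIdx n c` is the `Σ^0_{n+1}` subset of `ℕ` with index `c`. -/
def SigmaNumIdx : ℕ → CodeO → Set ℕ
  | 0, c => {m | (eval0 c m).Dom}
  | n + 1, c => {m | ∃ k, Nat.pair m k ∉ SigmaNumIdx n c}

/-- `S ⊆ ℕ` is `Σ^0_n` (intended for `n ≥ 1`). -/
def SigmaN (n : ℕ) (S : Set ℕ) : Prop := ∃ c : CodeO, S = SigmaNumIdx (n - 1) c

/-- The set of codes of the elements of a set of binary strings. -/
def strCodes (S : Set (List Bool)) : Set ℕ := {m | ∃ σ ∈ S, Encodable.encode σ = m}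

/-- A set of binary strings is `Σ^0_n`. -/
def SigmaStr (n : ℕ) (S : Set (List Bool)) : Prop := SigmaN n (strCodes S)

/-- A set of binary strings is `Π^0_n`: its complement is `Σ^0_n`. -/
def PiStr (n : ℕ) (S : Set (List Bool)) : Prop := SigmaStr n Sᶜ

/-- A set of binary strings is c.e. relative to the oracle `O`. -/
def CeStrIn (O : ℕ → ℕ) (S : Set (List Bool)) : Prop := CeIn O (strCodes S)

/-- `SigmaClassIdx n c m` is the `Σ^0_{n+1}` class of elements of Cantor space
with index `c` and parameter `m`. -/
def SigmaClassIdx : ℕ → CodeO → ℕ → Set Cantor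
  | 0, c, m => {X | (evalO X c m).Dom}
  | n + 1, c, m => {X | ∃ k, X ∉ SigmaClassIdx n c (Nat.pair m k)}

/-! ### Monotone machines -/

/-- A monotone machine: a partial computable, monotone map on finite binary strings. -/
structure MonoMachine where
  f : List Bool →. List Bool
  partrec : Partrec f
  mono : ∀ ⦃σ τ a b : List Bool⦄, σ <+: τ → a ∈ f σ → b ∈ f τ → a <+: b

/-- The oracles `X` such that the output of the monotone machine on `X` is infinite. -/
def MonoINF (M : MonoMachine) : Set Cantor :=
  {X | ∀ k, ∃ n a, a ∈ M.f (initSeg X n) ∧ k ≤ a.length}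

/-- The `k`-th bit of the output `M(X)` of a monotone machine is `b`. -/
def MonoMachine.hasBit (M : MonoMachine) (X : Cantor) (k : ℕ) (b : Bool) : Prop :=
  ∃ n a, a ∈ M.f (initSeg X n) ∧ a[k]? = some b

/-- `U` is a universal monotone machine. -/
def UniversalMono (U : MonoMachine) : Prop :=
  ∃ (M : ℕ → MonoMachine) (σ : ℕ → List Bool),
    Partrec₂ (fun (e : ℕ) (τ : List Bool) => (M e).f τ) ∧
    (∀ V : MonoMachine, ∃ e, (M e).f = V.f) ∧
    Computable σ ∧ IsPrefixFree (Set.range σ) ∧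
    ∀ e τ, U.f (σ e ++ τ) = (M e).f τ

/-! ### Infinitary self-delimiting machines -/

/-- Chaitin's infinitary self-delimiting machines: `f σ n` is the `n`-th approximation
of the output on program `σ` (`none` meaning divergence); the convergence relation is
decidable, approximations are monotone, and machines are self-delimiting. -/
structure InfMachine where
  f : List Bool → ℕ → Option (List Bool)
  computable : Computable₂ f
  mono : ∀ σ m n a, n < m → f σ m = some a → ∃ b, f σ n = some b ∧ b <+: a
  sd : ∀ σ τ n a, f σ n = some a → f (σ ++ τ) n = some a

/-- `M^∞(σ)↓`: all approximations converge. -/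
def InfMachine.domInf (M : InfMachine) (σ : List Bool) : Prop := ∀ n, M.f σ n ≠ none

/-- The domain of `M^∞`. -/
def InfMachine.DOM (M : InfMachine) : Set (List Bool) := {σ | M.domInf σ}

/-- The output `M^∞(σ)` is infinite (a stream). -/
def InfMachine.outInf (M : InfMachine) (σ : List Bool) : Prop :=
  ∀ k, ∃ n a, M.f σ n = some a ∧ k ≤ a.length

/-- `FIN(M^∞)`: programs in the domain with finite output. -/
def InfMachine.FIN (M : InfMachine) : Set (List Bool) := {σ | M.domInf σ ∧ ¬ M.outInf σ}

/-- `INF(M^∞)`: programs in the domain with infinite output. -/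
def InfMachine.INF (M : InfMachine) : Set (List Bool) := {σ | M.domInf σ ∧ M.outInf σ}

/-- The `k`-th bit of the output `M^∞(σ)` is `b`. -/
def InfMachine.hasBit (M : InfMachine) (σ : List Bool) (k : ℕ) (b : Bool) : Prop :=
  ∃ n a, M.f σ n = some a ∧ a[k]? = some b

/-- The domain of the prefix-free machine `M^*`: minimal strings in the domain of `M^∞`. -/
def InfMachine.DOMstar (M : InfMachine) : Set (List Bool) :=
  {σ | M.domInf σ ∧ ∀ τ, τ <+: σ → τ ≠ σ → ¬ M.domInf τ}

/-- Programs whose output is a stream with a tail of 1s. -/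
def InfMachine.COFout (M : InfMachine) : Set (List Bool) :=
  {σ | M.domInf σ ∧ M.outInf σ ∧ ∃ t, ∀ k, t ≤ k → M.hasBit σ k true}

/-- `A^∞(σ) ≃ B^∞(τ)`: both converge or both diverge, with equal outputs. -/
def InfAgree (A : InfMachine) (σ : List Bool) (B : InfMachine) (τ : List Bool) : Prop :=
  (A.domInf σ ↔ B.domInf τ) ∧ (A.domInf σ → ∀ k b, (A.hasBit σ k b ↔ B.hasBit τ k b))

/-- `U` is a universal infinitary self-delimiting machine. -/
def UniversalInf (U : InfMachine) : Prop :=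
  ∃ (M : ℕ → InfMachine) (σ : ℕ → List Bool),
    Computable (fun p : ℕ × List Bool × ℕ => (M p.1).f p.2.1 p.2.2) ∧
    (∀ V : InfMachine, ∃ e, ∀ τ, InfAgree (M e) τ V τ) ∧
    Computable σ ∧ IsPrefixFree (Set.range σ) ∧
    ∀ e τ, InfAgree U (σ e ++ τ) (M e) τ

end RandProb

namespace RandProb

/-!
Write `J = {τ | ∃ k, ∀ l, R τ k l}` with `R` computably enumerable. From `X` we compute a sequence
`h` in which `i = ⟨n, k⟩` reappears whenever `R (X ↾ n) k` is verified for a longer initial segment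
of the `l`, and also when `i` enters `∅'`; every other term is its own position. If `X` has a
prefix in `J`, some value recurs infinitely often in `h`, and otherwise `h` tends to infinity.

The machine enumerates the deficiency set `{n | ∃ t > n, h t ≤ h n}` of `h`, as the identity on it.
Since `h` is strictly increasing on the complement, the true stages, a value recurring infinitely
often leaves only finitely many of them. If `h` tends to infinity there are infinitely many, and
the `e`-th one is at or beyond every occurrence of `e` in `h`, hence past the stage at which
`e` enters `∅'`. The deficiency set then computes `∅'`, so it is neither cofinite nor computable.
-/

open Nat.Partrec (Code)
open Filter

namespace CodeO

theorem eval_partrec {O : ℕ → ℕ} (hO : Computable O) (c : CodeO) : Nat.Partrec (c.eval O) := by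
  induction c with
  | zero => exact .zero
  | succ => exact .succ
  | left => exact .left
  | right => exact .right
  | oracle => exact Partrec.nat_iff.1 hO
  | pair f g hf hg => exact hf.pair hg
  | comp f g hf hg => exact hf.comp hg
  | prec f g hf hg => exact hf.prec hg
  | rfind' f hf => exact hf.rfind'

/-- The oracle-free program `c` as an oracle program. -/
def ofCode : Code → CodeO
  | .zero => .zero
  | .succ => .succ
  | .left => .left
  | .right => .right
  | .pair f g => .pair (ofCode f) (ofCode g)
  | .comp f g => .comp (ofCode f) (ofCode g)
  | .prec f g => .prec (ofCode f) (ofCode g)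
  | .rfind' f => .rfind' (ofCode f)

theorem eval_ofCode (O : ℕ → ℕ) (c : Code) : (ofCode c).eval O = c.eval := by
  induction c with
  | zero | succ | left | right => rfl
  | pair f g hf hg | comp f g hf hg | prec f g hf hg =>
    simp only [ofCode, eval, Code.eval, hf, hg]
    rfl
  | rfind' f hf =>
    simp only [ofCode, eval, Code.eval, hf]
    rfl

/-- The oracle program `c` run with the zero oracle, as an oracle-free program: oracle queries
become the constant zero. -/
def toCode : CodeO → Code
  | .zero => .zero
  | .succ => .succ
  | .left => .left
  | .right => .right
  | .oracle => .zero
  | .pair f g => .pair f.toCode g.toCode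
  | .comp f g => .comp f.toCode g.toCode
  | .prec f g => .prec f.toCode g.toCode
  | .rfind' f => .rfind' f.toCode

theorem eval_toCode (c : CodeO) : c.toCode.eval = eval0 c := by
  unfold eval0
  induction c with
  | zero | succ | left | right | oracle => rfl
  | pair f g hf hg | comp f g hf hg | prec f g hf hg =>
    simp only [toCode, eval, Code.eval, hf, hg]
    rfl
  | rfind' f hf =>
    simp only [toCode, eval, Code.eval, hf]
    rfl

/-- The inverse of the numbering `CodeO.encode`. A number `n ≥ 5` codes a compound program, whose
outermost constructor is given by `(n - 5) % 4` and whose parts are coded by `(n - 5) / 4`. -/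
def ofNat (n : ℕ) : CodeO :=
  if h : n < 5 then [zero, succ, left, right, oracle].getD n zero
  else
    let m := (n - 5) / 4
    have : m < n := by omega
    have : m.unpair.1 < n := (Nat.unpair_left_le m).trans_lt this
    have : m.unpair.2 < n := (Nat.unpair_right_le m).trans_lt ‹m < n›
    [pair (ofNat m.unpair.1) (ofNat m.unpair.2), prec (ofNat m.unpair.1) (ofNat m.unpair.2),
      comp (ofNat m.unpair.1) (ofNat m.unpair.2), rfind' (ofNat m)].getD ((n - 5) % 4) zero

theorem encode_ofNat (n : ℕ) : (ofNat n).encode = n := by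
  induction n using Nat.strong_induction_on with
  | _ n ih =>
    by_cases hn : n < 5
    · interval_cases n <;> simp [ofNat, encode]
    · set m := (n - 5) / 4 with hm
      have hmn : m < n := by omega
      have hpair : Nat.pair (ofNat m.unpair.1).encode (ofNat m.unpair.2).encode = m := by
        rw [ih _ ((Nat.unpair_left_le m).trans_lt hmn), ih _ ((Nat.unpair_right_le m).trans_lt hmn),
          Nat.pair_unpair]
      have hmod : (n - 5) % 4 < 4 := Nat.mod_lt _ (by norm_num)
      rw [ofNat, dif_neg hn]
      interval_cases hr : (n - 5) % 4 <;> simp [encode, ← hm, hpair, ih m hmn] <;> omega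

theorem ofNat_four_mul_add_five (m : ℕ) {i : ℕ} (hi : i < 4) : ofNat (4 * m + i + 5) =
    [pair (ofNat m.unpair.1) (ofNat m.unpair.2), prec (ofNat m.unpair.1) (ofNat m.unpair.2),
      comp (ofNat m.unpair.1) (ofNat m.unpair.2), rfind' (ofNat m)].getD i zero := by
  have hdiv : (4 * m + i + 5 - 5) / 4 = m := by omega
  have hmod : (4 * m + i + 5 - 5) % 4 = i := by omega
  rw [ofNat, dif_neg (by omega)]
  simp only [hdiv, hmod]

theorem ofNat_encode (c : CodeO) : ofNat c.encode = c := by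
  induction c with
  | zero | succ | left | right | oracle => simp [ofNat, encode]
  | pair f g hf hg =>
    rw [show (pair f g).encode = 4 * Nat.pair f.encode g.encode + 0 + 5 by
      rw [encode]; omega, ofNat_four_mul_add_five _ (i := 0) (by norm_num)]
    simp [hf, hg]
  | comp f g hf hg =>
    rw [show (comp f g).encode = 4 * Nat.pair f.encode g.encode + 2 + 5 by
      rw [encode]; omega, ofNat_four_mul_add_five _ (by norm_num)]
    simp [hf, hg]
  | prec f g hf hg =>
    rw [show (prec f g).encode = 4 * Nat.pair f.encode g.encode + 1 + 5 by
      rw [encode]; omega, ofNat_four_mul_add_five _ (by norm_num)]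
    simp [hf, hg]
  | rfind' f hf =>
    rw [show (rfind' f).encode = 4 * f.encode + 3 + 5 by
      rw [encode]; omega, ofNat_four_mul_add_five _ (by norm_num)]
    simp [hf]

/-- The course-of-values step computing `(ofNat n).toCode` from the list `L` of its values at
`0, …, n - 1`. -/
def toCodeStep (L : List Code) : Code :=
  let m := (L.length - 5) / 4
  let f := L.getD m.unpair.1 .zero
  let g := L.getD m.unpair.2 .zero
  if L.length < 5 then [Code.zero, .succ, .left, .right, .zero].getD L.length .zero
  else [f.pair g, f.prec g, f.comp g, (L.getD m .zero).rfind'].getD ((L.length - 5) % 4) .zero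

theorem toCodeStep_map_range (n : ℕ) :
    toCodeStep ((List.range n).map fun k => (ofNat k).toCode) = (ofNat n).toCode := by
  have hget : ∀ k < n, ((List.range n).map fun k => (ofNat k).toCode).getD k .zero =
      (ofNat k).toCode := fun k hk => by simp [List.getD, hk]
  have hmap : ∀ (l : List CodeO) k, (l.getD k zero).toCode = (l.map toCode).getD k .zero :=
    fun l k => (List.getD_map ..).symm
  rw [ofNat, toCodeStep, List.length_map, List.length_range]
  split_ifs with hn
  · rw [hmap]; rfl
  · have hm : (n - 5) / 4 < n := by omega
    rw [hmap, hget _ hm, hget _ ((Nat.unpair_left_le _).trans_lt hm),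
      hget _ ((Nat.unpair_right_le _).trans_lt hm)]
    rfl

theorem primrec_toCodeStep : Primrec toCodeStep := by
  have hn : Primrec fun L : List Code => L.length := Primrec.list_length
  have hn5 : Primrec fun L : List Code => L.length - 5 := Primrec.nat_sub.comp hn (.const 5)
  have hm : Primrec fun L : List Code => (L.length - 5) / 4 := Primrec.nat_div.comp hn5 (.const 4)
  have hget {i : List Code → ℕ} (hi : Primrec i) :
      Primrec fun L : List Code => L.getD (i L) Code.zero :=
    (Primrec.list_getD Code.zero).comp .id hi
  have hf := hget (Primrec.fst.comp (Primrec.unpair.comp hm))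
  have hg := hget (Primrec.snd.comp (Primrec.unpair.comp hm))
  refine .ite (Primrec.nat_lt.comp hn (.const 5))
    ((Primrec.list_getD Code.zero).comp (.const _) hn)
    ((Primrec.list_getD Code.zero).comp ?_ (Primrec.nat_mod.comp hn5 (.const 4)))
  exact Primrec.list_cons.comp (Code.primrec₂_pair.comp hf hg) <|
    Primrec.list_cons.comp (Code.primrec₂_prec.comp hf hg) <|
    Primrec.list_cons.comp (Code.primrec₂_comp.comp hf hg) <|
    Primrec.list_cons.comp (Code.primrec_rfind'.comp (hget hm)) (.const [])

theorem primrec_toCode_ofNat : Primrec fun n => (ofNat n).toCode := by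
  have h : Primrec₂ fun (_ : Unit) n => (ofNat n).toCode :=
    Primrec.nat_strong_rec _ (Primrec.option_some.comp (primrec_toCodeStep.comp .snd)).to₂
      fun _ n => congrArg some (toCodeStep_map_range n)
  exact h.comp (.const ()) .id

end CodeO

section HaltingSet

theorem ceIn_of_rePred {S : Set ℕ} (hS : REPred (· ∈ S)) (O : ℕ → ℕ) : CeIn O S := by
  obtain ⟨c, hc⟩ := Code.exists_code.1 (Partrec.nat_iff.1 (hS.map (Computable.const 0).to₂))
  refine ⟨.ofCode c, Set.ext fun m => ?_⟩
  simp [CodeO.eval_ofCode, hc, Part.assert]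

theorem mem_haltingSet_iff {e : ℕ} : e ∈ HaltingSet ↔ (eval0 (.ofNat e) e).Dom := by
  have hex : (∃ c : CodeO, c.encode = e ∧ (eval0 c e).Dom) ↔ (eval0 (.ofNat e) e).Dom :=
    ⟨fun ⟨c, hc, h⟩ => by rwa [← hc, CodeO.ofNat_encode, hc],
      fun h => ⟨.ofNat e, CodeO.encode_ofNat e, h⟩⟩
  rw [← hex]
  exact ite_eq_left_iff.trans (by simp [eval0, iterJump])

theorem ceIn_haltingSet (O : ℕ → ℕ) : CeIn O HaltingSet := by
  have h : Partrec fun e => (CodeO.ofNat e).toCode.eval e :=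
    Code.eval_part.comp CodeO.primrec_toCode_ofNat.to_comp .id
  refine ceIn_of_rePred (h.dom_re.of_eq fun e => ?_) O
  rw [mem_haltingSet_iff, CodeO.eval_toCode]

theorem not_ceIn_compl_haltingSet : ¬ CeIn (fun _ => 0) HaltingSetᶜ := by
  rintro ⟨c, hc⟩
  have h : c.encode ∈ HaltingSetᶜ ↔ c.encode ∈ HaltingSet := by
    rw [mem_haltingSet_iff, CodeO.ofNat_encode, hc]
    rfl
  exact iff_not_self h.symm

theorem not_computablePred_haltingSet : ¬ ComputablePred (· ∈ HaltingSet) := fun h =>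
  not_ceIn_compl_haltingSet (ceIn_of_rePred h.not.to_re _)

theorem computable_chi_iff {A : Set ℕ} : Computable (chi A) ↔ ComputablePred (· ∈ A) := by
  constructor
  · intro h
    refine ComputablePred.computable_iff.2 ⟨fun n => chi A n == 1,
      Primrec.beq.to_comp.comp h (.const 1), funext fun n => ?_⟩
    by_cases hn : n ∈ A <;> simp [chi, hn]
  · intro h
    obtain ⟨f, hf, hfA⟩ := ComputablePred.computable_iff.1 h
    refine (Computable.cond hf (.const 1) (.const 0)).of_eq fun n => ?_
    have hn : n ∈ A ↔ f n = true := iff_of_eq (congrFun hfA n)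
    by_cases h : f n = true <;> simp [chi, hn, h]

theorem TuringLEs.computablePred {A B : Set ℕ} (h : TuringLEs B A)
    (hA : ComputablePred (· ∈ A)) : ComputablePred (· ∈ B) := by
  obtain ⟨c, hc⟩ := h
  rw [← computable_chi_iff] at hA ⊢
  exact (Partrec.nat_iff.2 (c.eval_partrec hA)).of_eq hc

theorem computablePred_of_finite_compl {A : Set ℕ} (hA : Aᶜ.Finite) :
    ComputablePred (· ∈ A) := by
  have h : PrimrecPred fun n => ∃ a ∈ hA.toFinset.toList, a = n :=
    Primrec.eq.exists_mem_list.comp (.const _) .id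
  exact h.computablePred.not.of_eq fun n => by simp

end HaltingSet

namespace CodeO

/-- Whether the program `c`, without an oracle, is seen to halt on input `m` within `v` steps. -/
def haltsIn (c : CodeO) (v m : ℕ) : Bool := (c.toCode.evaln v m).isSome

theorem monotone_haltsIn (c : CodeO) (m : ℕ) : Monotone fun v => c.haltsIn v m := by
  intro v w hvw
  simp only [Bool.le_iff_imp, haltsIn, Option.isSome_iff_exists]
  exact fun ⟨x, hx⟩ => ⟨x, Code.evaln_mono hvw hx⟩

theorem exists_haltsIn_iff {c : CodeO} {m : ℕ} : (∃ v, c.haltsIn v m) ↔ (eval0 c m).Dom := by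
  rw [← eval_toCode, Part.dom_iff_mem]
  simp only [haltsIn, Option.isSome_iff_exists, Code.evaln_complete, Option.mem_def]
  exact exists_comm

theorem primrec_haltsIn (c : CodeO) : Primrec₂ c.haltsIn :=
  Primrec.option_isSome.comp <| Code.primrec_evaln.comp <|
    (Primrec.fst.pair (.const c.toCode)).pair .snd

end CodeO

section OracleSearch

/-- `F` is computable uniformly in the oracle: a single program computes the total function `F O`
from every oracle `O`. -/
def OracleComputable (F : (ℕ → ℕ) → ℕ → ℕ) : Prop :=
  ∃ c : CodeO, ∀ O n, c.eval O n = Part.some (F O n)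

/-- The list `[O 0, …, O (t - 1)]`, the part of the oracle `O` available at stage `t`. -/
def oracleSeg (O : ℕ → ℕ) (t : ℕ) : List ℕ := (List.range t).map O

namespace CodeO

variable {O : ℕ → ℕ} {f g : CodeO} {n v : ℕ}

theorem mem_eval_comp : v ∈ (comp f g).eval O n ↔ ∃ m ∈ g.eval O n, v ∈ f.eval O m :=
  Part.mem_bind_iff

theorem mem_eval_pair :
    v ∈ (pair f g).eval O n ↔ ∃ a ∈ f.eval O n, ∃ b ∈ g.eval O n, Nat.pair a b = v := by
  change v ∈ (Part.map Nat.pair (f.eval O n)).bind (fun h => (g.eval O n).map h) ↔ _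
  simp

theorem mem_eval_rfind' {a : ℕ} :
    v ∈ (rfind' f).eval O (Nat.pair a 0) ↔
      v ∈ Nat.rfind fun t => (f.eval O (Nat.pair a t)).map fun m => decide (m = 0) := by
  simp only [eval, Nat.unpaired, Nat.unpair_pair, Nat.add_zero]
  exact (Part.mem_map_iff _).trans exists_eq_right

end CodeO

namespace OracleComputable

variable {F G : (ℕ → ℕ) → ℕ → ℕ}

theorem of_computable {f : ℕ → ℕ} (hf : Computable f) : OracleComputable fun _ => f := by
  obtain ⟨c, hc⟩ := Code.exists_code.1 (Partrec.nat_iff.1 hf)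
  exact ⟨.ofCode c, fun O n => by rw [CodeO.eval_ofCode, hc]; rfl⟩

theorem of_eq (hF : OracleComputable F) (h : ∀ O n, F O n = G O n) : OracleComputable G :=
  funext₂ h ▸ hF

theorem id : OracleComputable fun _ n => n := of_computable .id

theorem left : OracleComputable fun _ n => n.unpair.1 :=
  of_computable (Computable.fst.comp .unpair)

theorem right : OracleComputable fun _ n => n.unpair.2 :=
  of_computable (Computable.snd.comp .unpair)

theorem comp (hF : OracleComputable F) (hG : OracleComputable G) :
    OracleComputable fun O n => F O (G O n) := by
  obtain ⟨c, hc⟩ := hF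
  obtain ⟨d, hd⟩ := hG
  exact ⟨c.comp d, fun O n => Part.eq_some_iff.2 <| CodeO.mem_eval_comp.2 <| by simp [hc, hd]⟩

theorem oracle (hF : OracleComputable F) : OracleComputable fun O n => O (F O n) :=
  comp (F := fun O => O) ⟨.oracle, fun _ _ => rfl⟩ hF

theorem pair (hF : OracleComputable F) (hG : OracleComputable G) :
    OracleComputable fun O n => Nat.pair (F O n) (G O n) := by
  obtain ⟨c, hc⟩ := hF
  obtain ⟨d, hd⟩ := hG
  exact ⟨c.pair d, fun O n => Part.eq_some_iff.2 <| CodeO.mem_eval_pair.2 <| by simp [hc, hd]⟩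

theorem prec (hF : OracleComputable F) (hG : OracleComputable G) :
    OracleComputable fun O n => n.unpair.2.rec (F O n.unpair.1)
      fun y ih => G O (Nat.pair n.unpair.1 (Nat.pair y ih)) := by
  obtain ⟨c, hc⟩ := hF
  obtain ⟨d, hd⟩ := hG
  refine ⟨c.prec d, fun O n => ?_⟩
  simp only [CodeO.eval, Nat.unpaired]
  induction n.unpair.2 with
  | zero => exact hc ..
  | succ t ih =>
    simp only [ih]
    exact (Part.bind_some ..).trans (hd ..)

theorem encode_oracleSeg :
    OracleComputable fun O n => Encodable.encode (oracleSeg O n.unpair.2) := by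
  have happend : OracleComputable fun _ z =>
      Encodable.encode (Denumerable.ofNat (List ℕ) z.unpair.1 ++ [z.unpair.2]) :=
    of_computable <| Computable.encode.comp <| Computable.list_concat.comp
      ((Computable.ofNat _).comp (Computable.fst.comp .unpair)) (Computable.snd.comp .unpair)
  have hnil := of_computable (Computable.const (Encodable.encode ([] : List ℕ)))
  have hnext := happend.comp ((right.comp right).pair (left.comp right).oracle)
  refine (hnil.prec hnext).of_eq fun O n => ?_
  simp only [Nat.unpair_pair]
  induction n.unpair.2 with
  | zero => rfl
  | succ t ih =>
    dsimp only
    rw [ih]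
    simp [oracleSeg, List.range_succ]

theorem of_computable₂_oracleSeg {f : ℕ → List ℕ → ℕ} (hf : Computable₂ f) :
    OracleComputable fun O z => f z.unpair.1 (oracleSeg O z.unpair.2) := by
  have hf' : OracleComputable fun _ z =>
      f z.unpair.1 (Denumerable.ofNat (List ℕ) z.unpair.2) :=
    of_computable <| hf.comp (Computable.fst.comp .unpair)
      ((Computable.ofNat _).comp (Computable.snd.comp .unpair))
  simpa using hf'.comp (left.pair encode_oracleSeg)

theorem exists_code_isLeast (hF : OracleComputable F) : ∃ c : CodeO, ∀ O n t,
    t ∈ c.eval O n ↔ IsLeast {t | F O (Nat.pair n t) = 0} t := by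
  obtain ⟨c, hc⟩ := hF
  obtain ⟨d, hd⟩ := id.pair (of_computable (Computable.const 0))
  refine ⟨c.rfind'.comp d, fun O n t => CodeO.mem_eval_comp.trans ?_⟩
  simp only [hd, Part.mem_some_iff, exists_eq_left, CodeO.mem_eval_rfind', hc, Part.map_some]
  refine Nat.mem_rfind.trans ?_
  simp only [Part.mem_some_iff, Set.mem_ofPred_eq, IsLeast, mem_lowerBounds]
  grind

end OracleComputable

theorem exists_code_search {d : ℕ → List ℕ → Bool} {out : ℕ → List ℕ → ℕ}
    (hd : Computable₂ d) (hout : Computable₂ out) : ∃ c : CodeO, ∀ O n v, v ∈ c.eval O n ↔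
      ∃ t, IsLeast {t | d n (oracleSeg O t)} t ∧ out n (oracleSeg O t) = v := by
  have hd' : Computable₂ fun n L => bif d n L then 0 else 1 := .cond hd (.const 0) (.const 1)
  obtain ⟨search, hsearch⟩ :=
    (OracleComputable.of_computable₂_oracleSeg hd').exists_code_isLeast
  obtain ⟨i, hi⟩ := OracleComputable.id
  obtain ⟨o, ho⟩ := OracleComputable.of_computable₂_oracleSeg hout
  refine ⟨o.comp (i.pair search), fun O n v => ?_⟩
  have hcond : ∀ b : Bool, (bif b then 0 else 1) = 0 ↔ b = true := by decide
  simp [CodeO.mem_eval_comp, CodeO.mem_eval_pair, hi, ho, hsearch, hcond, eq_comm (b := v)]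

end OracleSearch

section DeficiencySet

/-- The deficiency set of `h` (Dekker's, when `h` is an injective enumeration): the stages after
which `h` takes a value that is at most the current one. The stages outside it are the true stages
of `h`. -/
def deficiencySet (h : ℕ → ℕ) : Set ℕ := {n | ∃ t > n, h t ≤ h n}

variable {h : ℕ → ℕ}

theorem lt_of_notMem_deficiencySet {n t : ℕ} (hn : n ∉ deficiencySet h) (hnt : n < t) :
    h n < h t :=
  not_le.1 fun hle => hn ⟨t, hnt, hle⟩

theorem strictMonoOn_compl_deficiencySet : StrictMonoOn h (deficiencySet h)ᶜ :=
  fun _ hm _ _ hmn => lt_of_notMem_deficiencySet hm hmn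

theorem finite_compl_deficiencySet {i : ℕ} (hi : ∃ᶠ t in atTop, h t = i) :
    (deficiencySet h)ᶜ.Finite := by
  refine .of_finite_image ((Set.finite_Iio i).subset ?_) strictMonoOn_compl_deficiencySet.injOn
  rintro _ ⟨n, hn, rfl⟩
  obtain ⟨t, hnt, rfl⟩ := (frequently_atTop'.1 hi) n
  exact lt_of_notMem_deficiencySet hn hnt

theorem infinite_compl_deficiencySet (hh : Tendsto h atTop atTop) :
    (deficiencySet h)ᶜ.Infinite := by
  refine Set.infinite_of_forall_exists_gt fun N => ?_
  obtain ⟨B, hB⟩ := eventually_atTop.1 (hh.eventually_gt_atTop (h (N + 1)))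
  have hfin : {t | h t ≤ h (N + 1)}.Finite :=
    (Set.finite_Iio B).subset fun t ht => not_le.1 fun hBt => (hB t hBt).not_ge ht
  have hN : N + 1 ∈ {t | h t ≤ h (N + 1)} := le_refl (h (N + 1))
  obtain ⟨s, hs, hmax⟩ := Set.exists_max_image _ id hfin ⟨N + 1, hN⟩
  exact ⟨s, fun ⟨t, hst, hts⟩ => hst.not_ge (hmax t (hts.trans hs)), hmax (N + 1) hN⟩

theorem le_nth_notMem_deficiencySet (hh : (deficiencySet h)ᶜ.Infinite) (s : ℕ) :
    s ≤ Nat.nth (· ∉ deficiencySet h) (h s) := by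
  have hmono : StrictMono fun e => h (Nat.nth (· ∉ deficiencySet h) e) := fun a b hab =>
    lt_of_notMem_deficiencySet (Nat.nth_mem_of_infinite hh a) (Nat.nth_strictMono hh hab)
  by_contra! hs
  exact (lt_of_notMem_deficiencySet (Nat.nth_mem_of_infinite hh (h s)) hs).not_ge
    (hmono.le_apply)

theorem exists_code_deficiencySet {g : List ℕ → ℕ} (hg : Computable g) :
    ∃ M : CodeO, ∀ O n v,
      v ∈ M.eval O n ↔ n ∈ deficiencySet (fun s => g (oracleSeg O s)) ∧ v = n := by
  have htake : Computable fun z : ℕ × List ℕ => g (z.2.take z.1) :=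
    hg.comp (Primrec.list_take.comp .fst .snd).to_comp
  have hd : Computable₂ fun n (L : List ℕ) => decide (n < L.length ∧ g L ≤ g (L.take n)) :=
    (Primrec.and.to_comp.comp
      (Primrec.nat_lt.decide.to_comp.comp .fst (Computable.list_length.comp .snd))
      (Primrec.nat_le.decide.to_comp.comp (hg.comp .snd) htake)).of_eq fun z => by simp
  obtain ⟨M, hM⟩ := exists_code_search hd (out := fun n _ => n) .fst
  have hdef : ∀ O n, n ∈ deficiencySet (fun s => g (oracleSeg O s)) ↔ ∃ t,
      decide (n < (oracleSeg O t).length ∧ g (oracleSeg O t) ≤ g ((oracleSeg O t).take n)) :=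
    fun O n => exists_congr fun t => by
      simp +contextual [oracleSeg, ← List.map_take, List.take_range, le_of_lt]
  refine ⟨M, fun O n v => ?_⟩
  rw [hM, exists_and_right, hdef, eq_comm]
  exact and_congr_left' ⟨fun ⟨t, ht⟩ => ⟨t, ht.1⟩, fun h => ⟨_, Nat.isLeast_find h⟩⟩

end DeficiencySet

section JumpSequence

/-- A sequence of natural numbers listing `i` once for each stage `v` at which `p i` increases. The
remaining terms are padded by their own position. -/
def jumpSeq (p : ℕ → ℕ → ℕ) (s : ℕ) : ℕ :=
  if p s.unpair.1 s.unpair.2 < p s.unpair.1 (s.unpair.2 + 1) then s.unpair.1 else s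

variable {p : ℕ → ℕ → ℕ}

theorem jumpSeq_pair {i v : ℕ} (h : p i v < p i (v + 1)) : jumpSeq p (Nat.pair i v) = i := by
  simp [jumpSeq, h]

theorem jumpSeq_congr {q : ℕ → ℕ → ℕ} {s : ℕ} (h : p s.unpair.1 = q s.unpair.1) :
    jumpSeq p s = jumpSeq q s := by
  rw [jumpSeq, h, jumpSeq]

theorem primrec_jumpSeq {α : Type*} [Primcodable α] {p : α → ℕ → ℕ → ℕ}
    (hp : Primrec fun z : α × ℕ × ℕ => p z.1 z.2.1 z.2.2) : Primrec₂ fun a => jumpSeq (p a) := by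
  have hi : Primrec fun z : α × ℕ => z.2.unpair.1 := .comp .fst (.comp .unpair .snd)
  have hv : Primrec fun z : α × ℕ => z.2.unpair.2 := .comp .snd (.comp .unpair .snd)
  have hnow := hp.comp (Primrec.fst.pair (hi.pair hv))
  have hnext := hp.comp (Primrec.fst.pair (hi.pair (Primrec.succ.comp hv)))
  exact Primrec.ite (Primrec.nat_lt.comp hnow hnext) hi .snd

theorem frequently_jumpSeq_eq {i : ℕ} (hi : ¬ BddAbove (Set.range (p i))) :
    ∃ᶠ s in atTop, jumpSeq p s = i := by
  refine frequently_atTop.2 fun N => ?_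
  by_contra! hN
  have hstep : ∀ v ≥ N, p i (v + 1) ≤ p i v := fun v hv =>
    not_lt.1 fun h => hN _ (hv.trans (Nat.right_le_pair i v)) (jumpSeq_pair h)
  have hbound : ∀ v ≥ N, p i v ≤ p i N := fun v hv => by
    induction v, hv using Nat.le_induction with
    | base => exact le_rfl
    | succ v hv ih => exact (hstep v hv).trans ih
  exact hi (isBoundedUnder_of_eventually_le (eventually_atTop.2 ⟨N, hbound⟩)).bddAbove_range

theorem finite_setOf_lt_succ {f : ℕ → ℕ} (hf : Monotone f) (hb : BddAbove (Set.range f)) :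
    {v | f v < f (v + 1)}.Finite := by
  have hmono : StrictMonoOn f {v | f v < f (v + 1)} := fun v hv _ _ hvw =>
    lt_of_lt_of_le hv (hf hvw)
  exact .of_finite_image (hb.finite.subset (Set.image_subset_range ..)) hmono.injOn

theorem tendsto_jumpSeq_atTop (hp : ∀ i, Monotone (p i)) (hb : ∀ i, BddAbove (Set.range (p i))) :
    Tendsto (jumpSeq p) atTop atTop := by
  rw [← Nat.cofinite_eq_atTop]
  refine Tendsto.cofinite_of_finite_preimage_singleton fun i => ?_
  refine (((finite_setOf_lt_succ (hp i) (hb i)).image (Nat.pair i)).insert i).subset ?_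
  intro s (hs : jumpSeq p s = i)
  rw [jumpSeq] at hs
  split_ifs at hs with h
  · subst hs
    exact .inr ⟨s.unpair.2, h, Nat.pair_unpair s⟩
  · exact .inl hs

end JumpSequence

section Progress

/-- The length, at stage `v`, of the initial segment of inputs `⟨a, 0⟩, ⟨a, 1⟩, …` on which `c` has
been seen to halt. -/
def verified (c : CodeO) (a v : ℕ) : ℕ :=
  Nat.findGreatest (fun l => ∀ j < l, c.haltsIn v (Nat.pair a j)) v

variable {K c : CodeO} {σ : ℕ → List Bool} {a i l v : ℕ}

theorem le_verified_iff :
    l ≤ verified c a v ↔ l ≤ v ∧ ∀ j < l, c.haltsIn v (Nat.pair a j) := by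
  refine ⟨fun h => ⟨h.trans (Nat.findGreatest_le v), fun j hj => ?_⟩,
    fun h => Nat.le_findGreatest h.1 h.2⟩
  exact Nat.findGreatest_spec (P := fun l => ∀ j < l, c.haltsIn v (Nat.pair a j)) v.zero_le
    (by simp) j (hj.trans_le h)

theorem monotone_verified (c : CodeO) (a : ℕ) : Monotone (verified c a) := fun v w hvw => by
  obtain ⟨hv, hhalt⟩ := le_verified_iff.1 (le_refl (verified c a v))
  exact le_verified_iff.2 ⟨hv.trans hvw, fun j hj => c.monotone_haltsIn _ hvw (hhalt j hj)⟩

theorem not_bddAbove_verified_iff :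
    ¬ BddAbove (Set.range (verified c a)) ↔ ∀ j, (eval0 c (Nat.pair a j)).Dom := by
  simp only [not_bddAbove_iff, Set.exists_range_iff, ← CodeO.exists_haltsIn_iff]
  constructor
  · intro h j
    obtain ⟨v, hv⟩ := h j
    exact ⟨v, (le_verified_iff.1 hv).2 j j.lt_succ_self⟩
  · intro h l
    have hhalt : ∀ j, ∀ᶠ v in atTop, c.haltsIn v (Nat.pair a j) := fun j =>
      (h j).elim fun v hv => eventually_atTop.2 ⟨v, fun w hvw => c.monotone_haltsIn _ hvw hv⟩
    obtain ⟨v, hv, hlv⟩ := (((Set.finite_Iio (l + 1)).eventually_all.2 fun j _ => hhalt j).and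
      (eventually_ge_atTop (l + 1))).exists
    exact ⟨v, le_verified_iff.2 ⟨hlv, hv⟩⟩

theorem primrec_verified (c : CodeO) : Primrec₂ (verified c) := by
  have hhalt : PrimrecRel fun j (z : ℕ × ℕ) => c.haltsIn z.2 (Nat.pair z.1 j) = true :=
    Primrec.eq.comp (c.primrec_haltsIn.comp (Primrec.snd.comp .snd)
      (Primrec₂.natPair.comp (Primrec.fst.comp .snd) .fst)) (.const true)
  have hall : PrimrecRel fun (z : ℕ × ℕ) l => ∀ j < l, c.haltsIn z.2 (Nat.pair z.1 j) = true :=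
    (hhalt.forall_mem_list.comp (Primrec.list_range.comp .snd) .fst).of_eq (by simp)
  exact Primrec.nat_findGreatest .snd hall

/-- The monotone quantity attached to `i = ⟨n, k⟩`. Its first summand is unbounded exactly when `c`
halts on `⟨⟨σ n, k⟩, l⟩` for every `l`; the second one makes it increase when `K` halts on `i`. -/
def progress (K c : CodeO) (σ : ℕ → List Bool) (i v : ℕ) : ℕ :=
  verified c (Nat.pair (Encodable.encode (σ i.unpair.1)) i.unpair.2) v + (K.haltsIn v i).toNat

theorem monotone_progress (K c : CodeO) (σ : ℕ → List Bool) (i : ℕ) :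
    Monotone (progress K c σ i) :=
  (monotone_verified c _).add fun _ _ hvw => Bool.toNat_le_toNat (K.monotone_haltsIn i hvw)

theorem primrec_progress {α : Type*} [Primcodable α] (K c : CodeO) {σ : α → ℕ → List Bool}
    (hσ : Primrec₂ σ) : Primrec fun z : α × ℕ × ℕ => progress K c (σ z.1) z.2.1 z.2.2 := by
  have hi : Primrec fun z : α × ℕ × ℕ => z.2.1 := .comp .fst .snd
  have hv : Primrec fun z : α × ℕ × ℕ => z.2.2 := .comp .snd .snd
  have hcode := Primrec.encode.comp (hσ.comp .fst (.comp .fst (.comp .unpair hi)))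
  have hverified := (primrec_verified c).comp
    (Primrec₂.natPair.comp hcode (.comp .snd (.comp .unpair hi))) hv
  exact Primrec.nat_add.comp hverified
    (.cond (K.primrec_haltsIn.comp hv hi) (.const 1) (.const 0))

theorem bddAbove_progress_iff : BddAbove (Set.range (progress K c σ i)) ↔ BddAbove (Set.range
    (verified c (Nat.pair (Encodable.encode (σ i.unpair.1)) i.unpair.2))) := by
  simp only [bddAbove_def, Set.forall_mem_range]
  exact ⟨fun ⟨B, hB⟩ => ⟨B, fun v => (Nat.le_add_right ..).trans (hB v)⟩,
    fun ⟨B, hB⟩ => ⟨B + 1, fun v => add_le_add (hB v) (Bool.toNat_le _)⟩⟩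

theorem exists_progress_lt_succ (hi : (eval0 K i).Dom) :
    ∃ v, progress K c σ i v < progress K c σ i (v + 1) ∧ K.haltsIn (v + 1) i := by
  have h0 : ¬ K.haltsIn 0 i := by simp [CodeO.haltsIn, Code.evaln]
  obtain ⟨v, hv, hv'⟩ :=
    Nat.exists_not_and_succ_of_not_zero_of_exists h0 (CodeO.exists_haltsIn_iff.2 hi)
  refine ⟨v, add_lt_add_of_le_of_lt (monotone_verified c _ v.le_succ) ?_, hv'⟩
  simp [hv, hv']

theorem exists_jumpSeq_progress_eq (hi : (eval0 K i).Dom) :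
    ∃ s, jumpSeq (progress K c σ) s = i ∧ K.haltsIn (s + 1) i := by
  obtain ⟨v, hlt, hv⟩ := exists_progress_lt_succ hi
  exact ⟨Nat.pair i v, jumpSeq_pair hlt,
    K.monotone_haltsIn _ (Nat.succ_le_succ (Nat.right_le_pair i v)) hv⟩

end Progress

section StageSequence

/-- The first `n` entries of `L` as bits, where every entry other than `1` is read as `false`. -/
def bitSeg (L : List ℕ) (n : ℕ) : List Bool := (L.take n).map (· == 1)

/-- The jump sequence of `progress` at stage `L.length`, computed from the initial segment `L` of
the oracle. The strings `progress` inspects at stage `s` have length at most `s`, so `L` is long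
enough to supply them. -/
def stageValue (K c : CodeO) (L : List ℕ) : ℕ := jumpSeq (progress K c (bitSeg L)) L.length

theorem bitSeg_oracleSeg_oX {X : Cantor} {n s : ℕ} (hn : n ≤ s) :
    bitSeg (oracleSeg (oX X) s) n = initSeg X n := by
  have hX : (· == 1) ∘ oX X = X := funext fun m => by cases h : X m <;> simp [oX, h]
  rw [bitSeg, oracleSeg, ← List.map_take, List.take_range, min_eq_left hn, List.map_map, hX,
    initSeg]

theorem primrec_bitSeg : Primrec₂ bitSeg :=
  Primrec.list_map (Primrec.list_take.comp .snd .fst) (Primrec.beq.comp .snd (.const 1)).to₂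

theorem stageValue_oracleSeg (K c : CodeO) (X : Cantor) (s : ℕ) :
    stageValue K c (oracleSeg (oX X) s) = jumpSeq (progress K c (initSeg X)) s := by
  have hlen : (oracleSeg (oX X) s).length = s := by simp [oracleSeg]
  have hle : s.unpair.1.unpair.1 ≤ s := (Nat.unpair_left_le _).trans (Nat.unpair_left_le _)
  rw [stageValue, hlen]
  refine jumpSeq_congr (funext fun v => ?_)
  rw [progress, bitSeg_oracleSeg_oX hle, progress]

theorem primrec_stageValue (K c : CodeO) : Primrec (stageValue K c) :=
  (primrec_jumpSeq (p := fun L => progress K c (bitSeg L))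
    (primrec_progress K c primrec_bitSeg)).comp .id .list_length

end StageSequence

section Reduction

variable {K : CodeO} {h : ℕ → ℕ}

theorem primrec_count {α : Type*} [Primcodable α] [DecidableEq α] (a : α) :
    Primrec (List.count a) :=
  (Primrec.list_length.comp (Primrec.listFilter (Primrec.eq.comp .id (.const a)))).of_eq fun _ =>
    List.count_eq_length_filter.symm

theorem count_zero_oracleSeg_chi (A : Set ℕ) (t : ℕ) :
    (oracleSeg (chi A) t).count 0 = Nat.count (· ∉ A) t := by
  induction t with
  | zero => rfl
  | succ t ih =>
    rw [oracleSeg, List.range_succ, List.map_append, List.count_append, ← oracleSeg, ih,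
      Nat.count_succ]
    by_cases ht : t ∈ A <;> simp [chi, ht]

/-- The `e`-th true stage bounds the positions at which `e` occurs in `h`, so the halting of `K` on
`e` is decided once `e + 1` true stages have passed. -/
theorem turingLEs_deficiencySet (hh : (deficiencySet h)ᶜ.Infinite)
    (hK : ∀ e, (eval0 K e).Dom → ∃ s, h s = e ∧ K.haltsIn (s + 1) e) :
    TuringLEs {e | (eval0 K e).Dom} (deficiencySet h) := by
  have hd : Primrec₂ fun e (L : List ℕ) => decide (e < L.count 0) :=
    Primrec.nat_lt.decide.comp .fst ((primrec_count 0).comp .snd)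
  have hout : Primrec₂ fun e (L : List ℕ) => (K.haltsIn L.length e).toNat :=
    .cond (K.primrec_haltsIn.comp (Primrec.list_length.comp .snd) .fst) (.const 1) (.const 0)
  obtain ⟨c, hc⟩ := exists_code_search hd.to_comp hout.to_comp
  refine ⟨c, fun e => Part.eq_some_iff.2 ((hc ..).2 ?_)⟩
  simp only [count_zero_oracleSeg_chi, decide_eq_true_eq]
  have hex : ∃ t, e < Nat.count (· ∉ deficiencySet h) t :=
    ⟨_, e.lt_succ_self.trans_eq (Nat.count_nth_succ_of_infinite hh e).symm⟩
  refine ⟨_, Nat.isLeast_find hex, ?_⟩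
  have ht := Nat.nth_lt_of_lt_count (Nat.find_spec hex)
  generalize Nat.find hex = t at ht ⊢
  have hhalts : K.haltsIn t e ↔ (eval0 K e).Dom := by
    refine ⟨fun h => CodeO.exists_haltsIn_iff.1 ⟨t, h⟩, fun he => ?_⟩
    obtain ⟨s, rfl, hs⟩ := hK e he
    exact K.monotone_haltsIn _ ((le_nth_notMem_deficiencySet hh s).trans_lt ht) hs
  have hlen : (oracleSeg (chi (deficiencySet h)) t).length = t := by simp [oracleSeg]
  simp [hlen, chi, ← hhalts, Bool.toNat, Bool.cond_eq_ite]

end Reduction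

theorem mem_iff_of_strCodes_eq {J : Set (List Bool)} {c : CodeO}
    (hc : strCodes J = SigmaNumIdx 2 c) (τ : List Bool) : τ ∈ J ↔
      ∃ k, ∀ l, (eval0 c (Nat.pair (Nat.pair (Encodable.encode τ) k) l)).Dom := by
  have hτ : τ ∈ J ↔ Encodable.encode τ ∈ strCodes J := by
    simp [strCodes, Encodable.encode_injective.eq_iff]
  rw [hτ, hc]
  simp [SigmaNumIdx]

theorem mem_cyl_iff {J : Set (List Bool)} {c K : CodeO} (hc : strCodes J = SigmaNumIdx 2 c)
    {X : Cantor} :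
    X ∈ cyl J ↔ ∃ i, ¬ BddAbove (Set.range (progress K c (initSeg X) i)) := by
  simp only [bddAbove_progress_iff, not_bddAbove_verified_iff]
  refine (exists_congr fun n => mem_iff_of_strCodes_eq hc _).trans ⟨?_, ?_⟩
  · rintro ⟨n, k, h⟩
    exact ⟨Nat.pair n k, by simpa using h⟩
  · rintro ⟨i, h⟩
    exact ⟨_, _, h⟩

theorem sigma3_to_oracle_machine_general (J : Set (List Bool)) (hJ : SigmaStr 3 J) :
    ∃ M : CodeO, ∀ X : Cantor,
      (X ∈ cyl J ↔ X ∈ COF M) ∧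
      (X ∈ cyl J ↔ X ∈ COM M) ∧
      domSet M X = ranSet M X ∧
      (X ∉ cyl J → TuringLEs HaltingSet (domSet M X)) := by
  obtain ⟨c, hc⟩ := hJ
  obtain ⟨K, hK⟩ := ceIn_haltingSet fun _ => 0
  obtain ⟨M, hM⟩ := exists_code_deficiencySet (primrec_stageValue K c).to_comp
  refine ⟨M, fun X => ?_⟩
  set D := deficiencySet (jumpSeq (progress K c (initSeg X)))
  replace hM : ∀ n v, v ∈ evalO X M n ↔ n ∈ D ∧ v = n := fun n v => by
    simpa only [stageValue_oracleSeg] using! hM (oX X) n v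
  have hdom : domSet M X = D := Set.ext fun n => by simp [domSet, Part.dom_iff_mem, hM]
  have hran : ranSet M X = D := Set.ext fun n => by simp [ranSet, hM]
  rw [COF, COM, Set.mem_ofPred_eq, Set.mem_ofPred_eq, hdom, hran]
  have hcof (hX : X ∈ cyl J) : Dᶜ.Finite :=
    ((mem_cyl_iff hc).1 hX).elim fun i hi => finite_compl_deficiencySet (frequently_jumpSeq_eq hi)
  have hcompl (hX : X ∉ cyl J) : TuringLEs HaltingSet D := by
    rw [mem_cyl_iff hc (K := K), not_exists_not] at hX
    rw [hK]
    exact turingLEs_deficiencySet (infinite_compl_deficiencySet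
      (tendsto_jumpSeq_atTop (monotone_progress K c _) hX)) fun _ => exists_jumpSeq_progress_eq
  have hcom (h : ComputablePred (· ∈ D)) : X ∈ cyl J := by
    by_contra hX
    exact not_computablePred_haltingSet ((hcompl hX).computablePred h)
  exact ⟨⟨hcof, fun h => hcom (computablePred_of_finite_compl h)⟩,
    ⟨fun hX => computablePred_of_finite_compl (hcof hX), hcom⟩, rfl, hcompl⟩

/-- **From a `Σ^0_3` set of strings to an oracle machine (cofiniteness/computability).**
Given an upward closed `Σ^0_3` set `J` of strings there is an oracle machine `M` such
that for every `X`: `X` has a prefix in `J` iff the domain of `M(X)` is cofinite iff the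
domain of `M(X)` is computable; moreover the domain of `M(X)` equals its range, and if
`X` has no prefix in `J` then the domain of `M(X)` computes the halting problem. -/
theorem sigma3_to_oracle_machine (J : Set (List Bool)) (hJ : SigmaStr 3 J)
    (hup : UpClosed J) :
    ∃ M : CodeO, ∀ X : Cantor,
      (X ∈ cyl J ↔ X ∈ COF M) ∧
      (X ∈ cyl J ↔ X ∈ COM M) ∧
      domSet M X = ranSet M X ∧
      (X ∉ cyl J → TuringLEs HaltingSet (domSet M X)) :=
  sigma3_to_oracle_machine_general J hJ

end RandProb
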